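/- Let Ω ⊆ ℂ be a domain and K₁, K₂ sesqui-analytic positive definite kernels on Ω with K₁ − K₂ non-negative definite. Then G_{K₁⁻¹} − G_{K₂⁻¹} is a non-negative definite kernel on Ω, where G_{K⁻¹}(z,w) = K(z,w)∂∂̄K(z,w) − ∂K(z,w)∂̄K(z,w). -/

import Mathlib

open scoped ComplexOrder

local notation "conj'" => (starRingEnd ℂ)

/-- `K` is a non-negative definite kernel on the set `s`. -/
def IsNNDOn (s : Set ℂ) (K : ℂ → ℂ → ℂ) : Prop :=
  ∀ (p : ℕ) (x : Fin p → ℂ), (∀ i, x i ∈ s) →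
    Matrix.PosSemidef (Matrix.of fun i j : Fin p => K (x i) (x j))

/-- `K` is sesqui-analytic on `s`: holomorphic in the first variable and
anti-holomorphic in the second. -/
def Sesq (s : Set ℂ) (K : ℂ → ℂ → ℂ) : Prop :=
  (∀ w ∈ s, AnalyticOnNhd ℂ (fun z => K z w) s) ∧
    (∀ z ∈ s, AnalyticOnNhd ℂ (fun w => conj' (K z w)) s)

/-- `∂`, the derivative in the first (holomorphic) variable. -/
noncomputable def D (K : ℂ → ℂ → ℂ) (z w : ℂ) : ℂ := deriv (fun u => K u w) z

/-- `∂̄`, the derivative in the conjugate of the second (anti-holomorphic) variable. -/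
noncomputable def Db (K : ℂ → ℂ → ℂ) (z w : ℂ) : ℂ :=
  conj' (deriv (fun u => conj' (K z u)) w)


/-- `K` is a positive definite kernel on the set `s`. -/
def IsPDOn (s : Set ℂ) (K : ℂ → ℂ → ℂ) : Prop :=
  ∀ (p : ℕ) (x : Fin p → ℂ), (∀ i, x i ∈ s) → Function.Injective x →
    Matrix.PosDef (Matrix.of fun i j : Fin p => K (x i) (x j))

/-!
`G_{K⁻¹}(z, w)` is the limit, as `h → 0`, of the `2 × 2` determinants
`K(z, w) K(z + h, w + h) - K(z, w + h) K(z + h, w)` divided by `|h|²`. With entrywise products these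
determinants form a quadratic expression in the Gram matrix of `K` at the points `xᵢ` and `xᵢ + h`.
Its value for `K₁` minus its value for `K₂` is half its polarization at `K₁ + K₂` and `K₁ - K₂`,
which is positive semidefinite by Schur's product theorem.

The limit over the diagonal shift `(h, h̄)` needs `K` to be regular in both variables jointly,
whereas sesqui-analyticity is a condition on each variable separately. This is Hartogs' theorem: by
Baire, `K` is bounded on a thin polydisc; its Taylor coefficients in the second variable are then
holomorphic in the first, of at most exponential growth, and pointwise of the growth dictated by the
full polydisc. The sub-mean value property of `log⁺ |g|` makes that growth locally uniform.
-/

open Metric Filter Topology MeasureTheory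
open scoped ENNReal

theorem log_norm_le_circleAverage {g : ℂ → ℂ} {c : ℂ} {s : ℝ} (hs : 0 < s)
    (hg : AnalyticOnNhd ℂ g (closedBall c s)) (hc : g c ≠ 0) :
    Real.log ‖g c‖ ≤ Real.circleAverage (fun z => Real.log ‖g z‖) c s := by
  rw [← abs_of_pos hs] at hg
  rw [AnalyticOnNhd.circleAverage_log_norm hs.ne' hg hc]
  refine le_add_of_nonneg_left (finsum_nonneg fun u => ?_)
  by_cases hu : u ∈ closedBall c |s|
  · refine mul_nonneg (mod_cast MeromorphicOn.AnalyticOnNhd.divisor_nonneg hg u) ?_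
    obtain rfl | hcu := eq_or_ne c u
    · simp
    rw [mem_closedBall', dist_eq_norm, abs_of_pos hs] at hu
    refine Real.log_nonneg ?_
    rwa [← div_eq_mul_inv, one_le_div (norm_sub_pos_iff.2 hcu)]
  · simp [Function.locallyFinsuppWithin.apply_eq_zero_of_notMem _ hu]

theorem posLog_norm_le_circleAverage {g : ℂ → ℂ} {c : ℂ} {s : ℝ} (hs : 0 < s)
    (hg : AnalyticOnNhd ℂ g (closedBall c s)) :
    Real.posLog ‖g c‖ ≤ Real.circleAverage (fun z => Real.posLog ‖g z‖) c s := by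
  have hsphere : sphere c |s| ⊆ closedBall c s := by
    rw [abs_of_pos hs]
    exact sphere_subset_closedBall
  have hnonneg : 0 ≤ Real.circleAverage (fun z => Real.posLog ‖g z‖) c s :=
    Real.circleAverage_nonneg_of_nonneg fun _ _ => Real.posLog_nonneg
  obtain hc | hc := eq_or_ne (g c) 0
  · simpa [hc] using hnonneg
  refine max_le hnonneg ((log_norm_le_circleAverage hs hg hc).trans ?_)
  refine Real.circleAverage_mono ?_ ?_ fun _ _ => le_max_right _ _
  · exact MeromorphicOn.circleIntegrable_log_norm fun z hz => (hg z (hsphere hz)).meromorphicAt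
  · exact (Real.continuous_posLog.comp_continuousOn
      (hg.continuousOn.mono hsphere).norm).circleIntegrable'

theorem lintegral_eq_lintegral_circleMap {f : ℂ → ℝ≥0∞} (hf : Measurable f) (c : ℂ) :
    ∫⁻ z, f z = ∫⁻ s in Set.Ioi (0 : ℝ),
      ENNReal.ofReal s * ∫⁻ θ in Set.Ioo (-Real.pi) Real.pi, f (circleMap c s θ) := by
  have hpolar (s θ : ℝ) : Complex.polarCoord.symm (s, θ) + c = circleMap c s θ := by
    rw [Complex.polarCoord_symm_apply, circleMap, Complex.exp_mul_I]
    push_cast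
    ring
  have hcircle : Continuous fun p : ℝ × ℝ => circleMap c p.1 p.2 := by
    unfold circleMap
    fun_prop
  rw [← lintegral_add_right_eq_self f c, ← Complex.lintegral_comp_polarCoord_symm,
    polarCoord_target, Measure.volume_eq_prod, ← Measure.prod_restrict, lintegral_prod]
  · refine lintegral_congr fun s => ?_
    simp only [hpolar, smul_eq_mul]
    exact lintegral_const_mul _ (hf.comp (continuous_circleMap c s).measurable)
  · have hmeas : Measurable fun p : ℝ × ℝ => ENNReal.ofReal p.1 * f (circleMap c p.1 p.2) :=
      (ENNReal.measurable_ofReal.comp measurable_fst).mul (hf.comp hcircle.measurable)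
    simpa only [← hpolar, smul_eq_mul] using hmeas.aemeasurable

theorem two_pi_mul_le_lintegral_circleMap {u : ℂ → ℝ} {c : ℂ} {s : ℝ} (hs : 0 ≤ s)
    (hu : ContinuousOn u (sphere c s)) (hu₀ : ∀ z ∈ sphere c s, 0 ≤ u z)
    (hc : u c ≤ Real.circleAverage u c s) :
    ENNReal.ofReal (u c) * ENNReal.ofReal (2 * Real.pi) ≤
      ∫⁻ θ in Set.Ioo (-Real.pi) Real.pi, ENNReal.ofReal (u (circleMap c s θ)) := by
  have hmem (θ : ℝ) : circleMap c s θ ∈ sphere c s := circleMap_mem_sphere c hs θ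
  have hcont : Continuous fun θ : ℝ => u (circleMap c s θ) :=
    hu.comp_continuous (continuous_circleMap c s) hmem
  have hperiod : ∫ θ in (0 : ℝ)..2 * Real.pi, u (circleMap c s θ) =
      ∫ θ in Set.Ioo (-Real.pi) Real.pi, u (circleMap c s θ) := by
    have h := ((periodic_circleMap c s).comp u).intervalIntegral_add_eq 0 (-Real.pi)
    rw [zero_add, show -Real.pi + 2 * Real.pi = Real.pi by ring,
      intervalIntegral.integral_of_le (neg_le_self Real.pi_pos.le) (b := Real.pi),
      integral_Ioc_eq_integral_Ioo] at h
    exact h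
  rw [← ENNReal.ofReal_mul' Real.two_pi_pos.le,
    ← ofReal_integral_eq_lintegral_ofReal
      (hcont.integrableOn_Icc.mono_set Set.Ioo_subset_Icc_self)
      (Eventually.of_forall fun θ => hu₀ _ (hmem θ)), ← hperiod]
  refine ENNReal.ofReal_le_ofReal ?_
  rw [Real.circleAverage, smul_eq_mul] at hc
  rwa [← le_inv_mul_iff₀' Real.two_pi_pos]

theorem mul_volume_ball_le_setLIntegral {u : ℂ → ℝ} {c : ℂ} {r : ℝ}
    (hu : ContinuousOn u (ball c r)) (hu₀ : ∀ z ∈ ball c r, 0 ≤ u z)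
    (hc : ∀ s ∈ Set.Ioo 0 r, u c ≤ Real.circleAverage u c s) :
    ENNReal.ofReal (u c) * volume (ball c r) ≤ ∫⁻ z in ball c r, ENNReal.ofReal (u z) := by
  have hmeas : Measurable ((ball c r).indicator fun z => ENNReal.ofReal (u z)) := by
    classical
    rw [← Set.piecewise_eq_indicator]
    exact (ENNReal.continuous_ofReal.comp_continuousOn hu).measurable_piecewise
      continuousOn_const measurableSet_ball
  rw [← setLIntegral_const, ← lintegral_indicator measurableSet_ball,
    ← lintegral_indicator measurableSet_ball,
    lintegral_eq_lintegral_circleMap (measurable_const.indicator measurableSet_ball) c,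
    lintegral_eq_lintegral_circleMap hmeas c]
  refine setLIntegral_mono' measurableSet_Ioi fun s (hs : 0 < s) => ?_
  gcongr ENNReal.ofReal s * ?_
  have hdist (θ : ℝ) : dist (circleMap c s θ) c = s := circleMap_mem_sphere c hs.le θ
  obtain hsr | hrs := lt_or_ge s r
  · have hsphere : sphere c s ⊆ ball c r := fun z hz => (mem_sphere.1 hz).trans_lt hsr
    have hmean := two_pi_mul_le_lintegral_circleMap hs.le (hu.mono hsphere)
      (fun z hz => hu₀ z (hsphere hz)) (hc s ⟨hs, hsr⟩)
    simpa [Set.indicator, hdist, hsr, two_mul] using hmean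
  · simp [Set.indicator, hdist, hrs.not_gt]

theorem posLog_norm_mul_volume_ball_le {g : ℂ → ℂ} {c : ℂ} {r : ℝ}
    (hg : DifferentiableOn ℂ g (ball c r)) :
    ENNReal.ofReal (Real.posLog ‖g c‖) * volume (ball c r) ≤
      ∫⁻ z in ball c r, ENNReal.ofReal (Real.posLog ‖g z‖) :=
  mul_volume_ball_le_setLIntegral
    (Real.continuous_posLog.comp_continuousOn hg.continuousOn.norm)
    (fun _ _ => Real.posLog_nonneg) fun _ hs =>
      posLog_norm_le_circleAverage hs.1
        ((hg.analyticOnNhd isOpen_ball).mono (closedBall_subset_ball hs.2))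

theorem posLog_le_add_mul_of_le {x M A : ℝ} (hx : 0 ≤ x) (n : ℕ) (h : x ≤ M * A ^ n) :
    Real.posLog x ≤ Real.posLog M + n * Real.posLog A :=
  calc Real.posLog x ≤ Real.posLog (M * A ^ n) := Real.posLog_le_posLog hx h
    _ ≤ Real.posLog M + Real.posLog (A ^ n) := Real.posLog_mul
    _ = Real.posLog M + n * Real.posLog A := by rw [Real.posLog_pow]

theorem tendsto_setLIntegral_posLog_norm_div {g : ℕ → ℂ → ℂ} {U : Set ℂ} {M A : ℝ}
    (hU : MeasurableSet U) (hU' : volume U ≠ ∞) (hg : ∀ n, ContinuousOn (g n) U)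
    (hgrowth : ∀ n, ∀ z ∈ U, ‖g n z‖ ≤ M * A ^ n)
    (hbdd : ∀ z ∈ U, ∃ C, ∀ n, ‖g n z‖ ≤ C) :
    Tendsto (fun n : ℕ => ∫⁻ z in U, ENNReal.ofReal (Real.posLog ‖g n z‖ / n)) atTop (𝓝 0) := by
  have hbound : ∀ n : ℕ, ∀ᵐ z ∂volume.restrict U, ENNReal.ofReal (Real.posLog ‖g n z‖ / n) ≤
      ENNReal.ofReal (Real.posLog M + Real.posLog A) := fun n =>
    (ae_restrict_iff' hU).2 (Eventually.of_forall fun z hz => by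
      gcongr
      obtain rfl | hn := n.eq_zero_or_pos
      · simpa using add_nonneg Real.posLog_nonneg Real.posLog_nonneg
      have hn' : (1 : ℝ) ≤ n := mod_cast hn
      rw [div_le_iff₀ (by positivity)]
      nlinarith [posLog_le_add_mul_of_le (norm_nonneg _) n (hgrowth n z hz),
        Real.posLog_nonneg (x := M)])
  have hlim : ∀ᵐ z ∂volume.restrict U,
      Tendsto (fun n : ℕ => ENNReal.ofReal (Real.posLog ‖g n z‖ / n)) atTop (𝓝 0) :=
    (ae_restrict_iff' hU).2 (Eventually.of_forall fun z hz => by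
      obtain ⟨C, hC⟩ := hbdd z hz
      rw [← ENNReal.ofReal_zero]
      refine ENNReal.tendsto_ofReal (squeeze_zero
        (fun n => div_nonneg Real.posLog_nonneg n.cast_nonneg) (fun n => ?_)
        (tendsto_const_div_atTop_nhds_zero_nat (Real.posLog C)))
      gcongr
      exact hC n)
  have hmeas (n : ℕ) : AEMeasurable (fun z => ENNReal.ofReal (Real.posLog ‖g n z‖ / n))
      (volume.restrict U) :=
    (ENNReal.continuous_ofReal.comp_continuousOn ((Real.continuous_posLog.comp_continuousOn
      (hg n).norm).div_const _)).aemeasurable hU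
  simpa using tendsto_lintegral_of_dominated_convergence' _ hmeas hbound
    (by simpa using ENNReal.mul_ne_top ENNReal.ofReal_ne_top hU') hlim

theorem eventually_norm_le_pow_of_pointwise_bounded {g : ℕ → ℂ → ℂ} {c : ℂ} {r R M A B : ℝ}
    (hg : ∀ n, DifferentiableOn ℂ (g n) (ball c R))
    (hgrowth : ∀ n, ∀ z ∈ ball c R, ‖g n z‖ ≤ M * A ^ n)
    (hbdd : ∀ z ∈ ball c R, ∃ C, ∀ n, ‖g n z‖ ≤ C) (hr : r < R) (hB : 1 < B) :
    ∀ᶠ n in atTop, ∀ z ∈ ball c r, ‖g n z‖ ≤ B ^ n := by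
  have hint := tendsto_setLIntegral_posLog_norm_div measurableSet_ball measure_ball_lt_top.ne
    (fun n => (hg n).continuousOn) hgrowth hbdd
  have hpos : 0 < ENNReal.ofReal (Real.log B) * volume (ball c (R - r)) :=
    ENNReal.mul_pos (by simpa using Real.log_pos hB) (measure_ball_pos _ _ (sub_pos.2 hr)).ne'
  filter_upwards [hint.eventually (gt_mem_nhds hpos), eventually_gt_atTop 0] with n hn hn₀ z hz
  have hn₀' : (0 : ℝ) < n := mod_cast hn₀
  have hball : ball z (R - r) ⊆ ball c R := ball_subset_ball' (by linarith [mem_ball.1 hz])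
  have hmean : ENNReal.ofReal (Real.posLog ‖g n z‖ / n) * volume (ball z (R - r)) ≤
      ∫⁻ x in ball c R, ENNReal.ofReal (Real.posLog ‖g n x‖ / n) := by
    simp only [div_eq_inv_mul, ENNReal.ofReal_mul (inv_nonneg.2 hn₀'.le)]
    rw [lintegral_const_mul' _ _ ENNReal.ofReal_ne_top, mul_assoc]
    gcongr
    exact (posLog_norm_mul_volume_ball_le ((hg n).mono hball)).trans
      (lintegral_mono_set hball)
  have hlog : Real.posLog ‖g n z‖ / n ≤ Real.log B := by
    have hvol : volume (ball z (R - r)) = volume (ball c (R - r)) := by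
      simp only [Complex.volume_ball]
    have h := (hmean.trans_lt hn).le
    rwa [hvol, ENNReal.mul_le_mul_iff_left (measure_ball_pos _ _ (sub_pos.2 hr)).ne'
      measure_ball_lt_top.ne, ENNReal.ofReal_le_ofReal_iff (Real.log_pos hB).le] at h
  rw [div_le_iff₀' hn₀', ← Real.log_pow] at hlog
  exact (Real.le_exp_of_log_le ((le_max_right _ _).trans hlog)).trans_eq
    (Real.exp_log (by positivity))

/-- `F` is holomorphic in each variable separately on `U × V`. No continuity in the pair of
variables is assumed; it is a consequence (Hartogs). -/
structure SeparatelyDifferentiableOn (F : ℂ → ℂ → ℂ) (U V : Set ℂ) : Prop where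
  left : ∀ w ∈ V, DifferentiableOn ℂ (fun z => F z w) U
  right : ∀ z ∈ U, DifferentiableOn ℂ (F z) V

section Dslope

variable {f : ℂ → ℂ} {b z : ℂ} {r C : ℝ}

theorem norm_dslope_le (hf : DifferentiableOn ℂ f (ball b r)) (hC : ∀ w ∈ ball b r, ‖f w‖ ≤ C)
    (hz : z ∈ ball b r) : ‖dslope f b z‖ ≤ 2 * C / r := by
  refine Complex.norm_dslope_le_div_of_mapsTo_ball hf (fun w hw => ?_) hz
  rw [mem_closedBall, dist_eq_norm]
  linarith [norm_sub_le (f w) (f b), hC w hw, hC b (mem_ball_self (pos_of_mem_ball hz))]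

theorem norm_sub_center_le (hf : DifferentiableOn ℂ f (ball b r))
    (hC : ∀ w ∈ ball b r, ‖f w‖ ≤ C) (hz : z ∈ ball b r) :
    ‖f z - f b‖ ≤ 2 * C / r * ‖z - b‖ := by
  rw [← sub_smul_dslope, norm_smul, mul_comm]
  gcongr
  exact norm_dslope_le hf hC hz

theorem differentiableOn_dslope_ball (hf : DifferentiableOn ℂ f (ball b r)) :
    DifferentiableOn ℂ (dslope f b) (ball b r) := by
  obtain hr | hr := le_or_gt r 0
  · simp [ball_eq_empty.2 hr, differentiableOn_empty]
  · exact (Complex.differentiableOn_dslope (ball_mem_nhds b hr)).2 hf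

theorem differentiableOn_iterate_dslope (hf : DifferentiableOn ℂ f (ball b r)) (n : ℕ) :
    DifferentiableOn ℂ ((Function.swap dslope b)^[n] f) (ball b r) := by
  induction n with
  | zero => exact hf
  | succ n ih =>
    rw [Function.iterate_succ_apply']
    exact differentiableOn_dslope_ball ih

theorem norm_iterate_dslope_le (hf : DifferentiableOn ℂ f (ball b r))
    (hC : ∀ w ∈ ball b r, ‖f w‖ ≤ C) (n : ℕ) :
    ∀ w ∈ ball b r, ‖(Function.swap dslope b)^[n] f w‖ ≤ C * (2 / r) ^ n := by
  induction n with
  | zero => simpa using hC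
  | succ n ih =>
    intro w hw
    rw [Function.iterate_succ_apply']
    refine (norm_dslope_le (differentiableOn_iterate_dslope hf n) ih hw).trans_eq ?_
    ring

theorem iterate_dslope_self (hf : AnalyticAt ℂ f b) (n : ℕ) :
    (Function.swap dslope b)^[n] f b = iteratedDeriv n f b / n.factorial := by
  have h := (hf.hasFPowerSeriesAt.has_fpower_series_iterate_dslope_fslope n).coeff_zero 1
  rw [← h, ← FormalMultilinearSeries.coeff, FormalMultilinearSeries.coeff_iterate_fslope,
    FormalMultilinearSeries.coeff_ofScalars, zero_add]

theorem hasSum_pow_mul_iterate_dslope (hf : DifferentiableOn ℂ f (ball b r))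
    (hz : z ∈ ball b r) :
    HasSum (fun n => (z - b) ^ n * (Function.swap dslope b)^[n] f b) (f z) := by
  have hb := hf.analyticAt (ball_mem_nhds b (pos_of_mem_ball hz))
  refine (Complex.hasSum_taylorSeries_on_ball hf hz).congr_fun fun n => ?_
  rw [iterate_dslope_self hb, smul_eq_mul, smul_eq_mul]
  ring

theorem exists_pow_mul_norm_iterate_dslope_le (hf : DifferentiableOn ℂ f (ball b r)) {t : ℝ}
    (ht : 0 < t) (htr : t < r) :
    ∃ M, ∀ n, t ^ n * ‖(Function.swap dslope b)^[n] f b‖ ≤ M := by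
  have hsub := closedBall_subset_ball (x := b) htr
  have hb := hf.analyticAt (ball_mem_nhds b (ht.trans htr))
  obtain ⟨M, hM⟩ := (isCompact_closedBall b t).exists_bound_of_continuousOn
    (hf.continuousOn.mono hsub)
  refine ⟨M, fun n => ?_⟩
  have hcauchy := Complex.norm_iteratedDeriv_le_of_forall_mem_sphere_norm_le n ht
    (hf.mono (closure_ball_subset_closedBall.trans hsub)).diffContOnCl
    fun z hz => hM z (sphere_subset_closedBall hz)
  rw [iterate_dslope_self hb, norm_div, Complex.norm_natCast]
  calc t ^ n * (‖iteratedDeriv n f b‖ / n.factorial)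
      ≤ t ^ n * (n.factorial * M / t ^ n / n.factorial) := by gcongr
    _ = M := by field_simp

end Dslope

namespace SeparatelyDifferentiableOn

variable {F : ℂ → ℂ → ℂ} {U V : Set ℂ}

theorem swap (hF : SeparatelyDifferentiableOn F U V) :
    SeparatelyDifferentiableOn (fun w z => F z w) V U :=
  ⟨hF.right, hF.left⟩

theorem mono (hF : SeparatelyDifferentiableOn F U V) {U' V' : Set ℂ} (hU : U' ⊆ U)
    (hV : V' ⊆ V) : SeparatelyDifferentiableOn F U' V' :=
  ⟨fun w hw => (hF.left w (hV hw)).mono hU, fun z hz => (hF.right z (hU hz)).mono hV⟩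

theorem differentiableOn_deriv_right {b : ℂ} {r C : ℝ}
    (hF : SeparatelyDifferentiableOn F U (ball b r)) (hU : IsOpen U)
    (hC : ∀ z ∈ U, ∀ w ∈ ball b r, ‖F z w‖ ≤ C) (hr : 0 < r) :
    DifferentiableOn ℂ (fun z => deriv (F z) b) U := by
  have hball : ∀ᶠ w in 𝓝[≠] b, w ∈ ball b r :=
    mem_nhdsWithin_of_mem_nhds (ball_mem_nhds b hr)
  have hlim : TendstoUniformlyOn (fun w z => dslope (F z) b w) (fun z => deriv (F z) b)
      (𝓝[≠] b) U := by
    have hzero : Tendsto (fun w => 2 * (2 * C / r) / r * ‖w - b‖) (𝓝[≠] b) (𝓝 0) := by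
      refine tendsto_nhdsWithin_of_tendsto_nhds ?_
      simpa using (tendsto_norm_sub_self b).const_mul (2 * (2 * C / r) / r)
    rw [Metric.tendstoUniformlyOn_iff]
    intro ε hε
    filter_upwards [hzero.eventually (gt_mem_nhds hε), hball] with w hwε hw z hz
    rw [dist_comm, dist_eq_norm, ← dslope_same]
    exact (norm_sub_center_le (differentiableOn_dslope_ball (hF.right z hz))
      (fun x hx => norm_dslope_le (hF.right z hz) (hC z hz) hx) hw).trans_lt hwε
  refine hlim.tendstoLocallyUniformlyOn.differentiableOn ?_ hU
  filter_upwards [self_mem_nhdsWithin, hball] with w hwb hw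
  simp only [dslope_of_ne _ hwb, slope_def_field]
  exact ((hF.left w hw).sub (hF.left b (mem_ball_self hr))).div_const _

theorem dslope_right {b : ℂ} {r C : ℝ} (hF : SeparatelyDifferentiableOn F U (ball b r))
    (hU : IsOpen U) (hC : ∀ z ∈ U, ∀ w ∈ ball b r, ‖F z w‖ ≤ C) :
    SeparatelyDifferentiableOn (fun z => dslope (F z) b) U (ball b r) where
  left w hw := by
    have hr := pos_of_mem_ball hw
    obtain rfl | hwb := eq_or_ne w b
    · simpa only [dslope_same] using hF.differentiableOn_deriv_right hU hC hr
    · simp only [dslope_of_ne _ hwb, slope_def_field]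
      exact ((hF.left w hw).sub (hF.left b (mem_ball_self hr))).div_const _
  right z hz := differentiableOn_dslope_ball (hF.right z hz)

theorem iterate_dslope_right {b : ℂ} {r C : ℝ} (hF : SeparatelyDifferentiableOn F U (ball b r))
    (hU : IsOpen U) (hC : ∀ z ∈ U, ∀ w ∈ ball b r, ‖F z w‖ ≤ C) (n : ℕ) :
    SeparatelyDifferentiableOn (fun z => (Function.swap dslope b)^[n] (F z)) U (ball b r) := by
  induction n with
  | zero => exact hF
  | succ n ih =>
    simp only [Function.iterate_succ_apply']
    exact ih.dslope_right hU fun z hz => norm_iterate_dslope_le (hF.right z hz) (hC z hz) n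

end SeparatelyDifferentiableOn

theorem exists_norm_le_mul_pow_of_pointwise_bounded {g : ℕ → ℂ → ℂ} {c : ℂ} {r R M A B : ℝ}
    (hg : ∀ n, DifferentiableOn ℂ (g n) (ball c R))
    (hgrowth : ∀ n, ∀ z ∈ ball c R, ‖g n z‖ ≤ M * A ^ n)
    (hbdd : ∀ z ∈ ball c R, ∃ C, ∀ n, ‖g n z‖ ≤ C) (hr : r < R) (hB : 1 < B) :
    ∃ C, ∀ n, ∀ z ∈ ball c r, ‖g n z‖ ≤ C * B ^ n := by
  obtain ⟨N, hN⟩ := eventually_atTop.1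
    (eventually_norm_le_pow_of_pointwise_bounded hg hgrowth hbdd hr hB)
  have hsum : 0 ≤ ∑ k ∈ Finset.range N, |M * A ^ k| := Finset.sum_nonneg fun _ _ => abs_nonneg _
  refine ⟨1 + ∑ k ∈ Finset.range N, |M * A ^ k|, fun n z hz => ?_⟩
  have hBn : 1 ≤ B ^ n := one_le_pow₀ hB.le
  obtain hn | hn := le_or_gt N n
  · nlinarith [hN n hn z hz]
  · have hterm : |M * A ^ n| ≤ ∑ k ∈ Finset.range N, |M * A ^ k| :=
      Finset.single_le_sum (f := fun k => |M * A ^ k|) (fun _ _ => abs_nonneg _)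
        (Finset.mem_range.2 hn)
    nlinarith [hgrowth n z (ball_subset_ball hr.le hz), le_abs_self (M * A ^ n)]

namespace SeparatelyDifferentiableOn

variable {F : ℂ → ℂ → ℂ} {U V : Set ℂ}

theorem exists_uniform_pow_mul_norm_iterate_dslope_le {z₀ b : ℂ} {r R s t ε C : ℝ}
    (hF : SeparatelyDifferentiableOn F (ball z₀ R) (ball b s))
    (hC : ∀ z ∈ ball z₀ R, ∀ w ∈ ball b ε, ‖F z w‖ ≤ C) (hε : 0 < ε) (hεs : ε ≤ s)
    (hr : r < R) (ht : 0 < t) (hts : t < s) :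
    ∃ M, ∀ n, ∀ z ∈ ball z₀ r, t ^ n * ‖(Function.swap dslope b)^[n] (F z) b‖ ≤ M := by
  obtain ⟨t₁, htt₁, ht₁s⟩ := exists_between hts
  have ht₁ : 0 < t₁ := ht.trans htt₁
  have hFε := hF.mono subset_rfl (ball_subset_ball hεs)
  have hnorm (n : ℕ) (z : ℂ) : ‖(t₁ : ℂ) ^ n * (Function.swap dslope b)^[n] (F z) b‖ =
      t₁ ^ n * ‖(Function.swap dslope b)^[n] (F z) b‖ := by
    rw [norm_mul, norm_pow, Complex.norm_of_nonneg ht₁.le]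
  obtain ⟨M, hM⟩ := exists_norm_le_mul_pow_of_pointwise_bounded
    (g := fun n z => (t₁ : ℂ) ^ n * (Function.swap dslope b)^[n] (F z) b)
    (M := C) (A := t₁ * (2 / ε)) (B := t₁ / t)
    (fun n => ((hFε.iterate_dslope_right isOpen_ball hC n).left b (mem_ball_self hε)).const_mul _)
    (fun n z hz => by
      rw [hnorm, mul_pow, mul_left_comm]
      gcongr
      exact norm_iterate_dslope_le (hFε.right z hz) (hC z hz) n b (mem_ball_self hε))
    (fun z hz => by
      simpa only [hnorm] using exists_pow_mul_norm_iterate_dslope_le (hF.right z hz) ht₁ ht₁s)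
    hr ((one_lt_div ht).2 htt₁)
  refine ⟨M, fun n z hz => ?_⟩
  have hn := hM n z hz
  rw [hnorm, div_pow, mul_div_assoc', le_div_iff₀ (pow_pos ht n)] at hn
  exact le_of_mul_le_mul_right (by linarith) (pow_pos ht₁ n)

theorem exists_norm_le_of_norm_le_thin_polydisc {z₀ b : ℂ} {r R s t ε C : ℝ}
    (hF : SeparatelyDifferentiableOn F (ball z₀ R) (ball b s))
    (hC : ∀ z ∈ ball z₀ R, ∀ w ∈ ball b ε, ‖F z w‖ ≤ C) (hε : 0 < ε) (hεs : ε ≤ s)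
    (hr : r < R) (hts : t < s) :
    ∃ M, ∀ z ∈ ball z₀ r, ∀ w ∈ ball b t, ‖F z w‖ ≤ M := by
  obtain ht | ht := le_or_gt t 0
  · simp [ball_eq_empty.2 ht]
  obtain ⟨t₁, htt₁, ht₁s⟩ := exists_between hts
  have ht₁ : 0 < t₁ := ht.trans htt₁
  obtain ⟨M, hM⟩ :=
    hF.exists_uniform_pow_mul_norm_iterate_dslope_le hC hε hεs hr ht₁ ht₁s
  refine ⟨M * (1 - t / t₁)⁻¹, fun z hz w hw => ?_⟩
  have hseries := hasSum_pow_mul_iterate_dslope (hF.right z (ball_subset_ball hr.le hz))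
    (ball_subset_ball hts.le hw)
  have hgeom := (hasSum_geometric_of_lt_one (div_nonneg ht.le ht₁.le)
    ((div_lt_one ht₁).2 htt₁)).mul_left M
  refine hseries.norm_le_of_bounded hgeom fun n => ?_
  rw [mem_ball, dist_eq_norm] at hw
  calc ‖(w - b) ^ n * (Function.swap dslope b)^[n] (F z) b‖
      ≤ t ^ n * ‖(Function.swap dslope b)^[n] (F z) b‖ := by
        rw [norm_mul, norm_pow]
        gcongr
    _ = t₁ ^ n * ‖(Function.swap dslope b)^[n] (F z) b‖ * (t / t₁) ^ n := by
        rw [div_pow]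
        field_simp
    _ ≤ M * (t / t₁) ^ n := by
        gcongr
        exact hM n z hz

end SeparatelyDifferentiableOn

theorem exists_isOpen_forall_norm_le {X Y E : Type*} [TopologicalSpace X] [TopologicalSpace Y]
    [BaireSpace Y] [SeminormedAddCommGroup E] {f : X → Y → E} {K : Set X} {V : Set Y}
    (hK : IsCompact K) (hV : IsOpen V) (hVne : V.Nonempty)
    (hfK : ∀ y ∈ V, ContinuousOn (fun x => f x y) K) (hfV : ∀ x ∈ K, ContinuousOn (f x) V) :
    ∃ W ⊆ V, IsOpen W ∧ W.Nonempty ∧ ∃ C : ℝ, ∀ x ∈ K, ∀ y ∈ W, ‖f x y‖ ≤ C := by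
  have := hV.baireSpace
  have := hVne.to_subtype
  have hclosed (N : ℕ) : IsClosed {y : V | ∀ x ∈ K, ‖f x y‖ ≤ N} := by
    simp only [Set.ofPred_forall]
    exact isClosed_biInter fun x hx =>
      isClosed_le (continuousOn_iff_continuous_domRestrict.1 (hfV x hx)).norm continuous_const
  have hcover : ⋃ N : ℕ, {y : V | ∀ x ∈ K, ‖f x y‖ ≤ N} = Set.univ := by
    refine Set.iUnion_eq_univ_iff.2 fun y => ?_
    obtain ⟨C, hC⟩ := hK.exists_bound_of_continuousOn (hfK y y.2)
    obtain ⟨N, hN⟩ := exists_nat_ge C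
    exact ⟨N, fun x hx => (hC x hx).trans hN⟩
  obtain ⟨N, hN⟩ := nonempty_interior_of_iUnion_of_closed hclosed hcover
  refine ⟨_, Subtype.coe_image_subset V _, hV.isOpenMap_subtype_val _ isOpen_interior,
    hN.image _, N, ?_⟩
  rintro x hx _ ⟨y, hy, rfl⟩
  exact interior_subset hy x hx

namespace SeparatelyDifferentiableOn

variable {F : ℂ → ℂ → ℂ} {U V : Set ℂ} {z₀ w₀ : ℂ}

theorem exists_bound_on_ball (hF : SeparatelyDifferentiableOn F U V) (hU : IsOpen U)
    (hV : IsOpen V) (hz₀ : z₀ ∈ U) (hw₀ : w₀ ∈ V) :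
    ∃ r > 0, ball z₀ r ⊆ U ∧ ball w₀ r ⊆ V ∧
      ∃ C, ∀ z ∈ ball z₀ r, ∀ w ∈ ball w₀ r, ‖F z w‖ ≤ C := by
  obtain ⟨R₁, hR₁, hU'⟩ := Metric.isOpen_iff.1 hU z₀ hz₀
  obtain ⟨R₂, hR₂, hV'⟩ := Metric.isOpen_iff.1 hV w₀ hw₀
  obtain ⟨R, hR, hRR₁, hRR₂⟩ : ∃ R > 0, 2 * R ≤ R₁ ∧ 3 * R ≤ R₂ :=
    ⟨min (R₁ / 2) (R₂ / 3), by positivity, by linarith [min_le_left (R₁ / 2) (R₂ / 3)],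
      by linarith [min_le_right (R₁ / 2) (R₂ / 3)]⟩
  have hKU : closedBall z₀ R ⊆ U := (closedBall_subset_ball (by linarith)).trans hU'
  have hWV : ball w₀ R ⊆ V := (ball_subset_ball (by linarith)).trans hV'
  obtain ⟨W, hWR, hW, ⟨b, hb⟩, C, hC⟩ := exists_isOpen_forall_norm_le
    (isCompact_closedBall z₀ R) isOpen_ball (nonempty_ball.2 hR)
    (fun w hw => (hF.left w (hWV hw)).continuousOn.mono hKU)
    (fun z hz => (hF.right z (hKU hz)).continuousOn.mono hWV)
  obtain ⟨ε, hε, hεW⟩ := Metric.isOpen_iff.1 hW b hb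
  have hbR : dist b w₀ < R := hWR hb
  have hFb : SeparatelyDifferentiableOn F (ball z₀ R) (ball b (2 * R)) :=
    hF.mono (ball_subset_closedBall.trans hKU) ((ball_subset_ball' (by linarith)).trans hV')
  obtain ⟨M, hM⟩ := hFb.exists_norm_le_of_norm_le_thin_polydisc (r := R / 2) (t := 3 * R / 2)
    (ε := min ε R)
    (fun z hz w hw => hC z (ball_subset_closedBall hz) w
      (hεW (ball_subset_ball (min_le_left _ _) hw)))
    (lt_min hε hR) ((min_le_right _ _).trans (by linarith)) (by linarith) (by linarith)
  rw [dist_comm] at hbR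
  exact ⟨R / 2, by positivity,
    (ball_subset_ball (by linarith)).trans (ball_subset_closedBall.trans hKU),
    (ball_subset_ball (by linarith)).trans hWV,
    M, fun z hz w hw => hM z hz w (ball_subset_ball' (by linarith) hw)⟩

theorem continuousAt_of_norm_le {r C : ℝ}
    (hF : SeparatelyDifferentiableOn F (ball z₀ r) (ball w₀ r)) (hr : 0 < r)
    (hC : ∀ z ∈ ball z₀ r, ∀ w ∈ ball w₀ r, ‖F z w‖ ≤ C) :
    ContinuousAt (fun p : ℂ × ℂ => F p.1 p.2) (z₀, w₀) := by
  have hw₀ : w₀ ∈ ball w₀ r := mem_ball_self hr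
  have hmem : ∀ᶠ p : ℂ × ℂ in 𝓝 (z₀, w₀), p ∈ ball z₀ r ×ˢ ball w₀ r :=
    (isOpen_ball.prod isOpen_ball).mem_nhds ⟨mem_ball_self hr, hw₀⟩
  have hzero : Tendsto (fun p : ℂ × ℂ => 2 * C / r * ‖p.2 - w₀‖ + 2 * C / r * ‖p.1 - z₀‖)
      (𝓝 (z₀, w₀)) (𝓝 0) :=
    Continuous.tendsto' (by fun_prop) _ _ (by simp)
  rw [ContinuousAt, tendsto_iff_norm_sub_tendsto_zero]
  refine squeeze_zero' (Eventually.of_forall fun _ => norm_nonneg _) ?_ hzero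
  filter_upwards [hmem] with p ⟨hz, hw⟩
  exact (norm_sub_le_norm_sub_add_norm_sub _ (F p.1 w₀) _).trans (add_le_add
    (norm_sub_center_le (hF.right _ hz) (hC _ hz) hw)
    (norm_sub_center_le (hF.left w₀ hw₀) (fun z hz => hC z hz w₀ hw₀) hz))

theorem tendsto_mixed_slope (hF : SeparatelyDifferentiableOn F U V) (hU : IsOpen U)
    (hV : IsOpen V) (hz₀ : z₀ ∈ U) (hw₀ : w₀ ∈ V) :
    Tendsto (fun p : ℂ × ℂ => (F p.1 p.2 - F p.1 w₀ - F z₀ p.2 + F z₀ w₀) /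
        ((p.1 - z₀) * (p.2 - w₀)))
      (𝓝[≠] z₀ ×ˢ 𝓝[≠] w₀) (𝓝 (deriv (fun z => deriv (F z) w₀) z₀)) := by
  obtain ⟨r, hr, hUr, hVr, C, hC⟩ := hF.exists_bound_on_ball hU hV hz₀ hw₀
  have hF₀ := hF.mono hUr hVr
  have hG := hF₀.dslope_right isOpen_ball hC
  have hGC : ∀ z ∈ ball z₀ r, ∀ w ∈ ball w₀ r, ‖dslope (F z) w₀ w‖ ≤ 2 * C / r :=
    fun z hz w hw => norm_dslope_le (hF₀.right z hz) (hC z hz) hw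
  have hH := (hG.swap.dslope_right isOpen_ball fun w hw z hz => hGC z hz w hw).swap
  have hcont := hH.continuousAt_of_norm_le hr fun z hz w hw =>
    norm_dslope_le (hG.left w hw) (fun z hz => hGC z hz w hw) hz
  have hlim : Tendsto (fun p : ℂ × ℂ => dslope (fun z => dslope (F z) w₀ p.2) z₀ p.1)
      (𝓝[≠] z₀ ×ˢ 𝓝[≠] w₀) (𝓝 (deriv (fun z => deriv (F z) w₀) z₀)) := by
    have hle : 𝓝[≠] z₀ ×ˢ 𝓝[≠] w₀ ≤ 𝓝 (z₀, w₀) := by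
      rw [nhds_prod_eq]
      exact prod_mono nhdsWithin_le_nhds nhdsWithin_le_nhds
    simpa only [dslope_same] using hcont.tendsto.mono_left hle
  refine hlim.congr' ?_
  filter_upwards [prod_mem_prod self_mem_nhdsWithin self_mem_nhdsWithin] with p ⟨hz, hw⟩
  rw [dslope_of_ne _ hz, slope_def_field, dslope_of_ne _ hw, dslope_of_ne _ hw,
    slope_def_field, slope_def_field, ← sub_div, div_div, mul_comm (p.2 - w₀)]
  ring

end SeparatelyDifferentiableOn

namespace SeparatelyDifferentiableOn

variable {F : ℂ → ℂ → ℂ} {U V : Set ℂ} {z₀ w₀ : ℂ}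

theorem tendsto_det_div (hF : SeparatelyDifferentiableOn F U V) (hU : IsOpen U)
    (hV : IsOpen V) (hz₀ : z₀ ∈ U) (hw₀ : w₀ ∈ V) :
    Tendsto (fun p : ℂ × ℂ => (F z₀ w₀ * F p.1 p.2 - F z₀ p.2 * F p.1 w₀) /
        ((p.1 - z₀) * (p.2 - w₀)))
      (𝓝[≠] z₀ ×ˢ 𝓝[≠] w₀)
      (𝓝 (F z₀ w₀ * deriv (fun z => deriv (F z) w₀) z₀ -
        deriv (fun z => F z w₀) z₀ * deriv (F z₀) w₀)) := by
  have hleft := ((hF.left w₀ hw₀).differentiableAt (hU.mem_nhds hz₀)).hasDerivAt.tendsto_slope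
  have hright := ((hF.right z₀ hz₀).differentiableAt (hV.mem_nhds hw₀)).hasDerivAt.tendsto_slope
  refine (((hF.tendsto_mixed_slope hU hV hz₀ hw₀).const_mul (F z₀ w₀)).sub
    ((hleft.comp tendsto_fst).mul (hright.comp tendsto_snd))).congr fun p => ?_
  rw [Function.comp_apply, Function.comp_apply, slope_def_field, slope_def_field,
    div_mul_div_comm, mul_div_assoc', ← sub_div]
  ring

end SeparatelyDifferentiableOn

section Matrix

open Matrix

variable {n 𝕜 : Type*} [RCLike 𝕜]

theorem posSemidef_of_tendsto [Finite n] {α : Type*} {l : Filter α} [l.NeBot]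
    {M : α → Matrix n n 𝕜} {A : Matrix n n 𝕜} (hM : ∀ᶠ a in l, (M a).PosSemidef)
    (hlim : Tendsto M l (𝓝 A)) : A.PosSemidef := by
  have := Fintype.ofFinite n
  refine .of_dotProduct_mulVec_nonneg ?_ fun x => ?_
  · refine tendsto_nhds_unique_of_eventuallyEq
      (((continuous_id.matrix_conjTranspose).tendsto A).comp hlim) hlim ?_
    filter_upwards [hM] with a ha using ha.isHermitian
  · have hquad : Continuous fun B : Matrix n n 𝕜 => star x ⬝ᵥ B *ᵥ x := by fun_prop
    refine ge_of_tendsto ((hquad.tendsto A).comp hlim) ?_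
    filter_upwards [hM] with a ha using ha.dotProduct_mulVec_nonneg x

/-- The determinant of a `2 × 2` block matrix computed with entrywise products of the blocks.
For the Gram matrix of a kernel at points `x i` and `y i` its entries are
`K (x i) (x j) * K (y i) (y j) - K (x i) (y j) * K (y i) (x j)`. -/
def hadamardDet (P : Matrix (n ⊕ n) (n ⊕ n) 𝕜) : Matrix n n 𝕜 :=
  P.toBlocks₁₁ ⊙ P.toBlocks₂₂ - P.toBlocks₁₂ ⊙ P.toBlocks₂₁

theorem posSemidef_sum_toBlocks_sub [Finite n] {P : Matrix (n ⊕ n) (n ⊕ n) 𝕜}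
    (hP : P.PosSemidef) :
    (P.toBlocks₁₁ + P.toBlocks₂₂ - (P.toBlocks₁₂ + P.toBlocks₂₁)).PosSemidef := by
  classical
  have := Fintype.ofFinite n
  have h := hP.conjTranspose_mul_mul_same (fromRows (1 : Matrix n n 𝕜) (-1))
  rw [← fromBlocks_toBlocks P, conjTranspose_fromRows_eq_fromCols_conjTranspose,
    fromCols_mul_fromBlocks, fromCols_mul_fromRows] at h
  convert h using 1
  simp only [conjTranspose_one, conjTranspose_neg, one_mul, mul_one, neg_mul, mul_neg]
  abel

theorem posSemidef_hadamardDet_polarization [Finite n] {P Q : Matrix (n ⊕ n) (n ⊕ n) 𝕜}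
    (hP : P.PosSemidef) (hQ : Q.PosSemidef) :
    (P.toBlocks₁₁ ⊙ Q.toBlocks₂₂ + P.toBlocks₂₂ ⊙ Q.toBlocks₁₁ -
      (P.toBlocks₁₂ ⊙ Q.toBlocks₂₁ + P.toBlocks₂₁ ⊙ Q.toBlocks₁₂)).PosSemidef :=
  posSemidef_sum_toBlocks_sub (hP.hadamard (hQ.submatrix Sum.swap))

theorem posSemidef_hadamardDet_sub [Finite n] {P Q : Matrix (n ⊕ n) (n ⊕ n) 𝕜}
    (hQ : Q.PosSemidef) (hPQ : (P - Q).PosSemidef) :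
    (hadamardDet P - hadamardDet Q).PosSemidef := by
  have hP : P.PosSemidef := by simpa using hPQ.add hQ
  have h := (posSemidef_hadamardDet_polarization (hP.add hQ) hPQ).smul (a := (2⁻¹ : 𝕜))
    (by positivity)
  convert h using 1
  ext i j
  simp only [hadamardDet, toBlocks₁₁, toBlocks₁₂, toBlocks₂₁, toBlocks₂₂, hadamard_apply, of_apply,
    Matrix.sub_apply, Matrix.add_apply, Matrix.smul_apply, smul_eq_mul]
  ring

end Matrix

theorem IsNNDOn.posSemidef {s : Set ℂ} {K : ℂ → ℂ → ℂ} (hK : IsNNDOn s K) {ι : Type*}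
    [Finite ι] {x : ι → ℂ} (hx : ∀ i, x i ∈ s) :
    (Matrix.of fun i j => K (x i) (x j)).PosSemidef := by
  let e := Finite.equivFin ι
  have h := (hK _ (x ∘ e.symm) fun i => hx _).submatrix e
  simpa [Matrix.submatrix, e] using h

theorem IsPDOn.isNNDOn {s : Set ℂ} {K : ℂ → ℂ → ℂ} (hK : IsPDOn s K) : IsNNDOn s K := by
  intro p x hx
  obtain ⟨n, ⟨e⟩⟩ := Finite.exists_equiv_fin (Set.range x)
  have hmem (i : Fin n) : (e.symm i : ℂ) ∈ s := Set.range_subset_iff.2 hx (e.symm i).2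
  have h := (hK n (fun i => e.symm i) hmem
    (Subtype.val_injective.comp e.symm.injective)).posSemidef.submatrix
      fun i => e ⟨x i, Set.mem_range_self i⟩
  simpa [Matrix.submatrix] using h

theorem Db_eq_deriv (K : ℂ → ℂ → ℂ) (z w : ℂ) :
    Db K z w = deriv (fun u => K z (conj' u)) (conj' w) := by
  have h := congr_fun (deriv_conj_conj (f := fun u => K z (conj' u))) w
  simpa [Db, Function.comp_def] using congr_arg conj' h

theorem Sesq.separatelyDifferentiableOn {s : Set ℂ} {K : ℂ → ℂ → ℂ} (hK : Sesq s K) :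
    SeparatelyDifferentiableOn (fun z w => K z (conj' w)) s (conj' ⁻¹' s) where
  left w hw := (hK.1 _ hw).differentiableOn
  right z hz w hw := by
    have h := (hK.2 z hz _ hw).differentiableAt.conj_conj
    simpa [Function.comp_def] using h.differentiableWithinAt

theorem Sesq.tendsto_det_div {s : Set ℂ} (hs : IsOpen s) {K : ℂ → ℂ → ℂ} (hK : Sesq s K)
    {z w : ℂ} (hz : z ∈ s) (hw : w ∈ s) :
    Tendsto (fun h => (K z w * K (z + h) (w + h) - K z (w + h) * K (z + h) w) / (h * conj' h))
      (𝓝[≠] 0) (𝓝 (K z w * D (Db K) z w - D K z w * Db K z w)) := by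
  have hshift : Tendsto (fun h => (z + h, conj' (w + h))) (𝓝[≠] 0)
      (𝓝[≠] z ×ˢ 𝓝[≠] (conj' w)) := by
    have hpunctured {f : ℂ → ℂ} (hf : Continuous f) (hinj : f.Injective) :
        Tendsto f (𝓝[≠] 0) (𝓝[≠] f 0) :=
      hf.continuousWithinAt.tendsto_nhdsWithin fun _ hne => hinj.ne hne
    simpa using (hpunctured (f := (z + ·)) (by fun_prop) (add_right_injective z)).prodMk
      (hpunctured (f := fun h => conj' (w + h)) (by fun_prop)
        ((RingHom.injective _).comp (add_right_injective w)))
  have hlim := hK.separatelyDifferentiableOn.tendsto_det_div hs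
    (hs.preimage Complex.continuous_conj) hz (w₀ := conj' w) (by simpa using hw)
  have h := hlim.comp hshift
  simpa [Function.comp_def, ← Db_eq_deriv, D] using h

theorem stmt_11_general {Ω : Set ℂ} (hΩ : IsOpen Ω) {K₁ K₂ : ℂ → ℂ → ℂ} (hs₁ : Sesq Ω K₁)
    (hs₂ : Sesq Ω K₂) (hK₂ : IsNNDOn Ω K₂) (hdom : IsNNDOn Ω (fun z w => K₁ z w - K₂ z w)) :
    IsNNDOn Ω (fun z w =>
      (K₁ z w * D (Db K₁) z w - D K₁ z w * Db K₁ z w) -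
        (K₂ z w * D (Db K₂) z w - D K₂ z w * Db K₂ z w)) := by
  intro p x hx
  let gram (K : ℂ → ℂ → ℂ) (h : ℂ) : Matrix (Fin p ⊕ Fin p) (Fin p ⊕ Fin p) ℂ :=
    .of fun i j => K (Sum.elim x (x · + h) i) (Sum.elim x (x · + h) j)
  refine posSemidef_of_tendsto (l := 𝓝[≠] (0 : ℂ))
    (M := fun h => (h * conj' h)⁻¹ • (hadamardDet (gram K₁ h) - hadamardDet (gram K₂ h))) ?_ ?_
  · have hnear : ∀ᶠ h in 𝓝[≠] (0 : ℂ), ∀ i, x i + h ∈ Ω :=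
      eventually_all.2 fun i => ((continuous_const_add (x i)).tendsto' 0 (x i) (by simp)).mono_left
        nhdsWithin_le_nhds |>.eventually_mem (hΩ.mem_nhds (hx i))
    filter_upwards [hnear] with h hh
    have hmem : ∀ i, Sum.elim x (x · + h) i ∈ Ω := Sum.forall.2 ⟨hx, hh⟩
    exact (posSemidef_hadamardDet_sub (hK₂.posSemidef hmem) (hdom.posSemidef hmem)).smul
      (inv_nonneg.2 (mul_star_self_nonneg h))
  · refine tendsto_pi_nhds.2 fun i => tendsto_pi_nhds.2 fun j => ?_
    refine ((hs₁.tendsto_det_div hΩ (hx i) (hx j)).sub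
      (hs₂.tendsto_det_div hΩ (hx i) (hx j))).congr fun h => ?_
    rw [← sub_div, div_eq_inv_mul]
    rfl

/-- Monotonicity of the Gaussian curvature kernel: if `K₁, K₂` are sesqui-analytic
positive definite kernels on a domain `Ω ⊆ ℂ` with `K₁ − K₂` non-negative definite,
then `G_{K₁⁻¹} − G_{K₂⁻¹}` is non-negative definite, where
`G_{K⁻¹} = K ∂∂̄K − ∂K ∂̄K`. -/
theorem stmt_11 (Ω : Set ℂ) (hΩo : IsOpen Ω) (hΩc : IsConnected Ω)
    (K₁ K₂ : ℂ → ℂ → ℂ) (hs₁ : Sesq Ω K₁) (hs₂ : Sesq Ω K₂)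
    (hp₁ : IsPDOn Ω K₁) (hp₂ : IsPDOn Ω K₂)
    (hdom : IsNNDOn Ω (fun z w => K₁ z w - K₂ z w)) :
    IsNNDOn Ω (fun z w =>
      (K₁ z w * D (Db K₁) z w - D K₁ z w * Db K₁ z w) -
        (K₂ z w * D (Db K₂) z w - D K₂ z w * Db K₂ z w)) :=
  stmt_11_general hΩo hs₁ hs₂ hp₂.isNNDOn hdom
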